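/- For every L ≥ 2, the transition matrix M_L of the asymmetric annihilation process satisfies the order-one block recursion M_L = [[M_{L-1} − α(σ⊗1_{L-2}), α·1_{L-1} + (σ⊗1_{L-2})], [α·1_{L-1}, M_{L-1} − 1_{L-1} − α(σ⊗1_{L-2})]], where M_L is written as a 2×2 block matrix whose blocks have size 2^{L-1}. -/

import Mathlib

open scoped BigOperators Classical

/-- Bitvectors of length `L`, with entries in `ZMod 2`. -/
abbrev BV (L : ℕ) := Fin L → ZMod 2

/-- `phi j` flips component `j` of a bitvector. -/
def phi {L : ℕ} (j : Fin L) (b : BV L) : BV L :=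
  fun i => b i + if i = j then 1 else 0

/-- `psi j` flips components `j` and `j+1` of a bitvector (only `j` if `j` is the last index). -/
def psi {L : ℕ} (j : Fin L) (b : BV L) : BV L :=
  fun i => b i + if i = j ∨ (i : ℕ) = (j : ℕ) + 1 then 1 else 0

/-- The transition matrix of the asymmetric annihilation process on `L+1` sites
(entry `(c,b)` is the rate of the transition from `b` to `c`). -/
noncomputable def Mmat (L : ℕ) (α β : ℝ) : Matrix (BV (L+1)) (BV (L+1)) ℝ :=
  Matrix.of fun c b =>
    if c = b then
      -(α + ((Finset.univ.filter fun j : Fin (L+1) => (j : ℕ) + 1 < L + 1 ∧ b j = 1).card : ℝ)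
        + β * if b (Fin.last L) = 1 then 1 else 0)
    else
      (if c = phi 0 b then α else 0)
      + (if ∃ j : Fin (L+1), (j : ℕ) + 1 < L + 1 ∧ b j = 1 ∧ c = psi j b then 1 else 0)
      + (if b (Fin.last L) = 1 ∧ c = phi (Fin.last L) b then β else 0)

/-- Splitting a bitvector of length `L+1` according to its first (most significant) bit:
bitvectors starting with `0` come first in the binary-value order. -/
def splitEquiv (L : ℕ) : BV (L+1) ≃ (BV L ⊕ BV L) where
  toFun b := if b 0 = 0 then Sum.inl (Fin.tail b) else Sum.inr (Fin.tail b)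
  invFun s := Sum.elim (Fin.cons 0) (Fin.cons 1) s
  left_inv b := by
    by_cases h : b 0 = 0
    · simp only [if_pos h, Sum.elim_inl]
      conv_rhs => rw [← Fin.cons_self_tail b]
      rw [h]
    · have h1 : b 0 = 1 := by
        have : ∀ x : ZMod 2, x = 0 ∨ x = 1 := by decide
        rcases this (b 0) with h0 | h0
        · exact absurd h0 h
        · exact h0
      simp only [if_neg h, Sum.elim_inr]
      conv_rhs => rw [← Fin.cons_self_tail b]
      rw [h1]
  right_inv s := by
    rcases s with b | b
    · simp [Fin.cons_zero, Fin.tail_cons]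
    · simp [Fin.cons_zero, Fin.tail_cons, (by decide : ¬ (1 : ZMod 2) = 0)]

/-- The Kronecker product `σ ⊗ 1` where `σ = [[0,1],[1,0]]` and `1` is the identity
of size `2^L`: it flips the first (most significant) bit. -/
def SK (L : ℕ) : Matrix (BV (L+1)) (BV (L+1)) ℝ :=
  Matrix.of fun b c => if b = phi 0 c then 1 else 0

theorem phi_zero_cons {n : ℕ} (x : ZMod 2) (b : BV (n+1)) :
    phi 0 (Fin.cons x b : BV (n+2)) = Fin.cons (x+1) b := by
  funext i
  refine Fin.cases ?_ (fun i => ?_) i <;> simp [phi]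

theorem phi_last_cons {n : ℕ} (x : ZMod 2) (b : BV (n+1)) :
    phi (Fin.last (n+1)) (Fin.cons x b : BV (n+2)) = Fin.cons x (phi (Fin.last n) b) := by
  funext i
  refine Fin.cases ?_ (fun i => ?_) i
  · simp [phi, Fin.ext_iff]
  · simp [phi, Fin.ext_iff]

theorem psi_zero_cons {n : ℕ} (x : ZMod 2) (b : BV (n+1)) :
    psi 0 (Fin.cons x b : BV (n+2)) = Fin.cons (x+1) (phi 0 b) := by
  funext i
  refine Fin.cases ?_ (fun i => ?_) i
  · simp [psi]
  · have h : ((i : ℕ) = 0) ↔ i = 0 := by rw [Fin.ext_iff]; rfl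
    simp only [psi, phi, Fin.cons_succ, Fin.succ_ne_zero, false_or, Fin.val_succ, Fin.val_zero, zero_add, add_eq_right, h]

theorem psi_succ_cons {n : ℕ} (j : Fin (n+1)) (x : ZMod 2) (b : BV (n+1)) :
    psi j.succ (Fin.cons x b : BV (n+2)) = Fin.cons x (psi j b) := by
  funext i
  refine Fin.cases ?_ (fun i => ?_) i
  · have h : ¬ ((0 : Fin (n+2)) = j.succ ∨ ((0 : Fin (n+2)) : ℕ) = (j.succ : ℕ) + 1) := by
      rintro (h | h)
      · exact Fin.succ_ne_zero j h.symm
      · rw [Fin.val_zero] at h; omega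
    simp only [psi, Fin.cons_zero]
    rw [if_neg h, add_zero]
  · simp [psi, Fin.ext_iff]

theorem phi_ne {n : ℕ} (j : Fin n) (b : BV n) : b ≠ phi j b := by
  intro h
  have := congrFun h j
  simp [phi] at this

theorem cons_last {n : ℕ} (x : ZMod 2) (b : BV (n+1)) :
    (Fin.cons x b : BV (n+2)) (Fin.last (n+1)) = b (Fin.last n) := by
  rw [← Fin.succ_last, Fin.cons_succ]

theorem ex_cons {n : ℕ} (x y : ZMod 2) (c b : BV (n+1)) :
    (∃ j : Fin (n+1+1), (j : ℕ) + 1 < n + 1 + 1 ∧ (Fin.cons x b : BV (n+2)) j = 1 ∧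
      (Fin.cons y c : BV (n+2)) = psi j (Fin.cons x b : BV (n+2))) ↔
    ((x = 1 ∧ y = x + 1 ∧ c = phi 0 b) ∨
      (y = x ∧ ∃ j : Fin (n+1), (j : ℕ) + 1 < n + 1 ∧ b j = 1 ∧ c = psi j b)) := by
  rw [Fin.exists_fin_succ]
  simp only [psi_zero_cons, psi_succ_cons, Fin.cons_inj, Fin.cons_zero, Fin.cons_succ,
    Fin.val_zero, Fin.val_succ, add_lt_add_iff_right]
  constructor
  · rintro (⟨_, h⟩ | ⟨j, h1, h2, h3, h4⟩)
    · exact Or.inl h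
    · exact Or.inr ⟨h3, j, h1, h2, h4⟩
  · rintro (h | ⟨h3, j, h1, h2, h4⟩)
    · exact Or.inl ⟨by omega, h⟩
    · exact Or.inr ⟨j, h1, h2, h3, h4⟩

theorem card_cons {n : ℕ} (x : ZMod 2) (b : BV (n+1)) :
    (Finset.univ.filter fun j : Fin (n+1+1) => (j : ℕ) + 1 < n + 1 + 1 ∧
      (Fin.cons x b : BV (n+2)) j = 1).card =
    (if x = 1 then 1 else 0) +
    (Finset.univ.filter fun j : Fin (n+1) => (j : ℕ) + 1 < n + 1 ∧ b j = 1).card := by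
  simp only [Finset.card_filter]
  rw [Fin.sum_univ_succ]
  simp

theorem Mmat_cons (n : ℕ) (α β : ℝ) (x y : ZMod 2) (c b : BV (n+1)) :
    Mmat (n+1) α β (Fin.cons y c : BV (n+2)) (Fin.cons x b : BV (n+2)) =
    if y = x then Mmat n α β c b - (if x = 1 ∧ c = b then 1 else 0)
        - (if c = phi 0 b then α else 0)
    else (if y = x + 1 ∧ c = b then α else 0)
      + (if x = 1 ∧ y = x + 1 ∧ c = phi 0 b then 1 else 0) := by
  simp only [Mmat, Matrix.of_apply, ex_cons, card_cons, cons_last, phi_zero_cons,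
    phi_last_cons, Fin.cons_inj]
  by_cases hyx : y = x
  · subst hyx
    by_cases hcb : c = b
    · subst hcb
      have := phi_ne 0 c
      by_cases hy : y = 1 <;> simp [this, hy] <;> ring
    · simp [hcb]; ring
  · simp [hyx]

/-- For every `L ≥ 2` (here `L = n+2`), the transition matrix `M_L`
satisfies the order-one block recursion
`M_L = [[M_{L-1} − α(σ⊗1), α·1 + σ⊗1], [α·1, M_{L-1} − 1 − α(σ⊗1)]]`,
where the `2×2` block structure corresponds to the first (most significant) bit. -/
theorem statement0 (α β : ℝ) (n : ℕ) :
    Mmat (n+1) α β =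
      (Matrix.reindex (splitEquiv (n+1)).symm (splitEquiv (n+1)).symm)
        (Matrix.fromBlocks
          (Mmat n α β - α • SK n)
          (α • (1 : Matrix (BV (n+1)) (BV (n+1)) ℝ) + SK n)
          (α • (1 : Matrix (BV (n+1)) (BV (n+1)) ℝ))
          (Mmat n α β - 1 - α • SK n)) := by
  ext c b
  obtain ⟨c, rfl⟩ := (splitEquiv (n+1)).symm.surjective c
  obtain ⟨b, rfl⟩ := (splitEquiv (n+1)).symm.surjective b
  rw [Matrix.reindex_apply, Matrix.submatrix_apply, Equiv.symm_symm,
    Equiv.apply_symm_apply, Equiv.apply_symm_apply]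
  have h2 : (1 : ZMod 2) + 1 = 0 := by decide
  rcases c with c | c <;> rcases b with b | b
  all_goals
    simp only [splitEquiv, Equiv.coe_fn_symm_mk, Sum.elim_inl, Sum.elim_inr]
    rw [Mmat_cons]
    simp [SK, Matrix.one_apply, h2]
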